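/- Let g be holomorphic on the unit disc D. Then the Volterra operator T_g maps the Besov space B^1 into the Bloch space 𝓑 if and only if g ∈ 𝓑. -/

import Mathlib

open MeasureTheory Metric Complex Real Filter Set

noncomputable section

/-- `f` is holomorphic on the open unit disc. -/
def HolOn (f : ℂ → ℂ) : Prop := DifferentiableOn ℂ f (Metric.ball (0:ℂ) 1)

/-- The normalized Lebesgue area measure on `ℂ` (so the unit disc has total mass 1). -/
def dA : Measure ℂ := (ENNReal.ofReal π)⁻¹ • volume

/-- Bounded holomorphic functions on the unit disc. -/
def Hinf : Set (ℂ → ℂ) :=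
  {f | HolOn f ∧ ∃ C : ℝ, ∀ z ∈ Metric.ball (0:ℂ) 1, ‖f z‖ ≤ C}

/-- The Bloch space. -/
def Bloch : Set (ℂ → ℂ) :=
  {f | HolOn f ∧ ∃ C : ℝ, ∀ z ∈ Metric.ball (0:ℂ) 1,
      (1 - ‖z‖ ^ 2) * ‖deriv f z‖ ≤ C}

/-- The little Bloch space: `(1-|z|²)|f'(z)| → 0` as `|z| → 1⁻`. -/
def littleBloch : Set (ℂ → ℂ) :=
  {f | HolOn f ∧ ∀ ε : ℝ, 0 < ε → ∃ r : ℝ, r < 1 ∧ ∀ z ∈ Metric.ball (0:ℂ) 1,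
      r < ‖z‖ → (1 - ‖z‖ ^ 2) * ‖deriv f z‖ < ε}

/-- The `α`-logarithmic Bloch space. -/
def BlochLog (α : ℝ) : Set (ℂ → ℂ) :=
  {f | HolOn f ∧ ∃ C : ℝ, ∀ z ∈ Metric.ball (0:ℂ) 1,
      (1 - ‖z‖ ^ 2) * (Real.log (2 / (1 - ‖z‖ ^ 2))) ^ α *
        ‖deriv f z‖ ≤ C}

/-- The Besov space `B¹`: holomorphic `f` with `∫_D |f''| dA < ∞`. -/
def Besov1 : Set (ℂ → ℂ) :=
  {f | HolOn f ∧ ∫⁻ z in Metric.ball (0:ℂ) 1,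
      ENNReal.ofReal (‖deriv (deriv f) z‖) ∂dA < ⊤}

/-- The Besov space `Bᵖ` (`1 < p < ∞`): `∫_D (1-|z|)^(p-2) |f'(z)|^p dA(z) < ∞`. -/
def Besov (p : ℝ) : Set (ℂ → ℂ) :=
  {f | HolOn f ∧ ∫⁻ z in Metric.ball (0:ℂ) 1,
      ENNReal.ofReal ((1 - ‖z‖) ^ (p - 2) * ‖deriv f z‖ ^ p) ∂dA < ⊤}

open scoped Classical in
/-- The Besov space `Bᵖ` for all `1 ≤ p < ∞` (with the special definition at `p = 1`). -/
def BesovFull (p : ℝ) : Set (ℂ → ℂ) := if p = 1 then Besov1 else Besov p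

/-- The Möbius transformation `φ_a(z) = (a-z)/(1 - conj a · z)`. -/
def phi (a z : ℂ) : ℂ := (a - z) / (1 - (starRingEnd ℂ) a * z)

/-- The space `Q_s`. -/
def Qs (s : ℝ) : Set (ℂ → ℂ) :=
  {f | HolOn f ∧ ⨆ a ∈ Metric.ball (0:ℂ) 1, ∫⁻ z in Metric.ball (0:ℂ) 1,
      ENNReal.ofReal (‖deriv f z‖ ^ 2 *
        (1 - ‖phi a z‖ ^ 2) ^ s) ∂dA < ⊤}

/-- The space `Q_{s,log,α}`. -/
def QsLog (s α : ℝ) : Set (ℂ → ℂ) :=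
  {f | HolOn f ∧ ⨆ a ∈ Metric.ball (0:ℂ) 1,
      (ENNReal.ofReal ((Real.log (2 / (1 - ‖a‖))) ^ (2 * α)) *
        ∫⁻ z in Metric.ball (0:ℂ) 1,
          ENNReal.ofReal (‖deriv f z‖ ^ 2 *
            (1 - ‖phi a z‖ ^ 2) ^ s) ∂dA) < ⊤}

/-- The Volterra operator `T_g(f)(z) = ∫_0^z g'(ξ) f(ξ) dξ` (along the segment from 0 to z). -/
def Tg (g f : ℂ → ℂ) : ℂ → ℂ :=
  fun z => z * ∫ t in (0:ℝ)..1, deriv g ((t : ℂ) * z) * f ((t : ℂ) * z)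

/-- The companion operator `I_g(f)(z) = ∫_0^z g(ξ) f'(ξ) dξ` (along the segment from 0 to z). -/
def Ig (g f : ℂ → ℂ) : ℂ → ℂ :=
  fun z => z * ∫ t in (0:ℝ)..1, g ((t : ℂ) * z) * deriv f ((t : ℂ) * z)

/-- The multiplication operator `M_g(f) = g · f`. -/
def Mg (g f : ℂ → ℂ) : ℂ → ℂ := fun z => g z * f z

/-- `T` maps `X` into `Y`. -/
def MapsInto (T : (ℂ → ℂ) → (ℂ → ℂ)) (X Y : Set (ℂ → ℂ)) : Prop :=
  ∀ f ∈ X, T f ∈ Y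

/-- The Hardy space `H^q`. -/
def Hardy (q : ℝ) : Set (ℂ → ℂ) :=
  {f | HolOn f ∧ ∃ C : ℝ, ∀ r : ℝ, 0 < r → r < 1 →
      (1 / (2 * π)) * ∫ t in (0:ℝ)..(2 * π),
        ‖f ((r : ℂ) * Complex.exp ((t : ℂ) * Complex.I))‖ ^ q ≤ C}

/-- An inner function: bounded holomorphic with radial boundary values of modulus 1 a.e. -/
def IsInner (g : ℂ → ℂ) : Prop :=
  g ∈ Hinf ∧ ∀ᵐ t : ℝ ∂(volume.restrict (Set.Ioc (0:ℝ) (2 * π))),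
    Filter.Tendsto (fun r : ℝ => ‖g ((r : ℂ) * Complex.exp ((t : ℂ) * Complex.I))‖)
      (nhdsWithin 1 (Set.Iio 1)) (nhds 1)

/-- `X` has the f-property (division by inner functions). -/
def FProperty (X : Set (ℂ → ℂ)) : Prop :=
  ∀ h ∈ X, ∀ g : ℂ → ℂ, IsInner g →
    (fun z => h z / g z) ∈ Hardy 1 → (fun z => h z / g z) ∈ X

/-- The space of multipliers `M(X,Y)`. -/
def Mult (X Y : Set (ℂ → ℂ)) : Set (ℂ → ℂ) :=
  {g | HolOn g ∧ ∀ f ∈ X, (fun z => g z * f z) ∈ Y}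

end

lemma hol_deriv {f : ℂ → ℂ} (hf : HolOn f) : HolOn (deriv f) :=
  DifferentiableOn.deriv hf isOpen_ball

lemma HolOn.hasDerivAt' {f : ℂ → ℂ} (hf : HolOn f) {z : ℂ} (hz : ‖z‖ < 1) :
    HasDerivAt f (deriv f z) z :=
  (hf.differentiableAt (isOpen_ball.mem_nhds (by simpa using hz))).hasDerivAt

lemma Tg_hasDerivAt {g f : ℂ → ℂ} (hg : HolOn g) (hf : HolOn f) {z : ℂ} (hz : ‖z‖ < 1) :
    HasDerivAt (Tg g f) (deriv g z * f z) z := by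
  have hp : DifferentiableOn ℂ (fun z => deriv g z * f z) (ball (0:ℂ) 1) := (hol_deriv hg).mul hf
  obtain ⟨F, hF⟩ := hp.isExactOn_ball
  have key : ∀ w ∈ ball (0:ℂ) 1, Tg g f w = F w - F 0 := by
    intro w hw
    have hw' : ‖w‖ < 1 := by simpa using hw
    have hmem : ∀ t ∈ uIcc (0:ℝ) 1, (t:ℂ) * w ∈ ball (0:ℂ) 1 := by
      intro t ht
      rw [uIcc_of_le zero_le_one] at ht
      simp only [mem_ball, dist_zero_right, norm_mul, norm_real, Real.norm_eq_abs, abs_of_nonneg ht.1]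
      nlinarith [ht.1, ht.2, norm_nonneg w]
    have := intervalIntegral.integral_eq_sub_of_hasDerivAt (a := 0) (b := 1)
      (f := fun t : ℝ => F ((t:ℂ) * w))
      (f' := fun t : ℝ => w * (deriv g ((t : ℂ) * w) * f ((t : ℂ) * w))) ?_ ?_
    · unfold Tg
      rw [← intervalIntegral.integral_const_mul, this]
      simp
    · intro t ht
      have h1 := hF _ (hmem t ht)
      have h2 : HasDerivAt (fun t : ℝ => (t:ℂ) * w) (1 * w) t :=
        (Complex.ofRealCLM.hasDerivAt (x := t)).mul_const w
      have := HasDerivAt.comp t h1 h2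
      refine HasDerivAt.congr_deriv this ?_
      ring
    · apply ContinuousOn.intervalIntegrable
      have hc : ContinuousOn (fun t : ℝ => (t:ℂ) * w) (uIcc 0 1) := by fun_prop
      exact continuousOn_const.mul (hp.continuousOn.comp hc hmem)
  have h0 : HasDerivAt (fun w => F w - F 0) (deriv g z * f z) z :=
    (hF z (by simpa using hz)).sub_const _
  refine h0.congr_of_eventuallyEq ?_
  filter_upwards [isOpen_ball.mem_nhds (show z ∈ ball (0:ℂ) 1 by simpa using hz)] with w hw
  exact key w hw

lemma cauchy_bound {h : ℂ → ℂ} (hh : HolOn h) {r : ℝ} (hr0 : 0 < r) (hr1 : r < 1)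
    {z : ℂ} (hz : ‖z‖ < 1) :
    ENNReal.ofReal (2 * π * (1 - r)) * ‖h ((r:ℂ)^2 * z)‖ₑ ≤
      ∫⁻ θ in Ioo (-π) π, ‖h (circleMap 0 r θ)‖ₑ := by
  have hnw : ‖(r:ℂ)^2 * z‖ ≤ r ^ 2 := by
    simp only [norm_mul, norm_pow, norm_real, Real.norm_eq_abs, sq_abs]
    nlinarith [sq_nonneg r]
  have hw : (r:ℂ)^2 * z ∈ ball (0:ℂ) r := by
    simp only [mem_ball, dist_zero_right]
    nlinarith
  have hd : DifferentiableOn ℂ h (closedBall 0 r) := hh.mono (closedBall_subset_ball hr1)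
  have hC := hd.circleIntegral_sub_inv_smul hw
  rw [circleIntegral] at hC
  set w := (r:ℂ)^2 * z with hwdef
  have hper : Function.Periodic (fun θ => deriv (circleMap 0 r) θ •
      ((circleMap 0 r θ - w)⁻¹ • h (circleMap 0 r θ))) (2 * π) := by
    intro θ
    simp only [deriv_circleMap, periodic_circleMap 0 r θ]
  have hsh := hper.intervalIntegral_add_eq 0 (-π)
  rw [zero_add, show -π + 2 * π = π by ring] at hsh
  rw [hsh, intervalIntegral.integral_of_le (by linarith [pi_pos]),
    integral_Ioc_eq_integral_Ioo] at hC
  have hle := enorm_integral_le_lintegral_enorm (μ := volume.restrict (Ioo (-π) π))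
    (fun θ => deriv (circleMap 0 r) θ • ((circleMap 0 r θ - w)⁻¹ • h (circleMap 0 r θ)))
  rw [hC] at hle
  have hpt : ∀ θ : ℝ, ‖deriv (circleMap 0 r) θ • ((circleMap 0 r θ - w)⁻¹ • h (circleMap 0 r θ))‖ₑ
      ≤ ENNReal.ofReal ((1 - r)⁻¹) * ‖h (circleMap 0 r θ)‖ₑ := by
    intro θ
    rw [← ofReal_norm, ← ofReal_norm, ← ENNReal.ofReal_mul (by simp; linarith)]
    apply ENNReal.ofReal_le_ofReal
    simp only [deriv_circleMap, smul_eq_mul, norm_mul, norm_inv, norm_circleMap_zero, norm_I, mul_one]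
    rw [← mul_assoc, abs_of_pos hr0]
    apply mul_le_mul_of_nonneg_right _ (norm_nonneg _)
    have h1 : r * (1 - r) ≤ ‖circleMap 0 r θ - w‖ := by
      have := norm_sub_norm_le (circleMap 0 r θ) w
      rw [norm_circleMap_zero, abs_of_pos hr0] at this
      nlinarith
    have h2 : 0 < r * (1 - r) := mul_pos hr0 (by linarith)
    calc r * ‖circleMap 0 r θ - w‖⁻¹ ≤ r * (r * (1 - r))⁻¹ := by gcongr
      _ = (1 - r)⁻¹ := by
        have : 1 - r ≠ 0 := by linarith
        field_simp
  have h3 := hle.trans (lintegral_mono hpt)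
  rw [lintegral_const_mul' _ _ ENNReal.ofReal_ne_top, enorm_smul] at h3
  have h4 : ‖(2 * π * I : ℂ)‖ₑ = ENNReal.ofReal (2 * π) := by
    rw [← ofReal_norm]; simp [abs_of_pos pi_pos]
  rw [h4] at h3
  have hr : 0 < 1 - r := by linarith
  calc ENNReal.ofReal (2 * π * (1 - r)) * ‖h w‖ₑ
      = ENNReal.ofReal (1 - r) * (ENNReal.ofReal (2 * π) * ‖h w‖ₑ) := by
        rw [ENNReal.ofReal_mul (by positivity)]; ring
    _ ≤ ENNReal.ofReal (1 - r) * (ENNReal.ofReal ((1 - r)⁻¹) *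
        ∫⁻ θ in Ioo (-π) π, ‖h (circleMap 0 r θ)‖ₑ) := by gcongr
    _ = _ := by
        rw [← mul_assoc, ← ENNReal.ofReal_mul hr.le, mul_inv_cancel₀ hr.ne']; simp

lemma taylor {f : ℂ → ℂ} (hf : HolOn f) {z : ℂ} (hz : ‖z‖ < 1) :
    ∫ r in (0:ℝ)..1, (2 * r * (1 - r^2) : ℂ) * z^2 * deriv (deriv f) ((r:ℂ)^2 * z) =
      f z - (f 0 + z * deriv f 0) := by
  have hmem : ∀ t ∈ uIcc (0:ℝ) 1, ‖(t:ℂ)^2 * z‖ < 1 := by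
    intro t ht
    rw [uIcc_of_le zero_le_one] at ht
    simp only [norm_mul, norm_pow, norm_real, Real.norm_eq_abs, sq_abs]
    have : t ^ 2 ≤ 1 := by nlinarith [ht.1, ht.2]
    nlinarith [norm_nonneg z, sq_nonneg t]
  have := intervalIntegral.integral_eq_sub_of_hasDerivAt (a := 0) (b := 1)
      (f := fun r : ℝ => (1 - (r:ℂ)^2) * (z * deriv f ((r:ℂ)^2 * z)) + f ((r:ℂ)^2 * z))
      (f' := fun r : ℝ => (2 * r * (1 - r^2) : ℂ) * z^2 * deriv (deriv f) ((r:ℂ)^2 * z)) ?_ ?_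
  · rw [this]; simp; ring
  · intro t ht
    have h0 : HasDerivAt (fun t : ℝ => (t:ℂ)^2) (2 * t) t := by
      have := (Complex.ofRealCLM.hasDerivAt (x := t)).pow 2
      refine HasDerivAt.congr_deriv this ?_
      simp
    have h2 := h0.mul_const z
    have ha := HasDerivAt.comp t (hf.hasDerivAt' (hmem t ht)) h2
    have hb := HasDerivAt.comp t ((hol_deriv hf).hasDerivAt' (hmem t ht)) h2
    have := ((h0.const_sub 1).mul (hb.const_mul z)).add ha
    refine HasDerivAt.congr_deriv this ?_
    simp only [Function.comp]
    ring
  · apply ContinuousOn.intervalIntegrable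
    have hc : ContinuousOn (fun t : ℝ => (t:ℂ)^2 * z) (uIcc 0 1) := by fun_prop
    have h3 := (hol_deriv (hol_deriv hf)).continuousOn.comp hc
      (fun t ht => by simpa using hmem t ht)
    exact (by fun_prop : ContinuousOn (fun r : ℝ => (2 * r * (1 - r^2) : ℂ) * z^2) (uIcc 0 1)).mul h3

lemma polar_ball (h : ℂ → ℂ) (hm : Measurable h) :
    ∫⁻ r in Ioo (0:ℝ) 1, ENNReal.ofReal r * ∫⁻ θ in Ioo (-π) π, ‖h (circleMap 0 r θ)‖ₑ ≤
      ∫⁻ z in ball (0:ℂ) 1, ‖h z‖ₑ := by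
  have hcm : ∀ p : ℝ × ℝ, Complex.polarCoord.symm p = circleMap 0 p.1 p.2 := by
    intro p
    rw [Complex.polarCoord_symm_apply, circleMap, zero_add, Complex.exp_mul_I]
    push_cast; rfl
  have hcirc : Measurable (fun p : ℝ × ℝ => circleMap 0 p.1 p.2) := by
    unfold circleMap; fun_prop
  rw [← lintegral_indicator measurableSet_ball, ← Complex.lintegral_comp_polarCoord_symm]
  have hsub : Ioo (0:ℝ) 1 ×ˢ Ioo (-π) π ⊆ polarCoord.target := by
    rw [polarCoord_target]
    exact prod_mono (fun x hx => hx.1) subset_rfl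
  refine le_trans ?_ (lintegral_mono_set hsub)
  have hmeas : Measurable (fun p : ℝ × ℝ => ENNReal.ofReal p.1 * ‖h (circleMap 0 p.1 p.2)‖ₑ) :=
    (by fun_prop : Measurable fun p : ℝ × ℝ => ENNReal.ofReal p.1).mul (hm.comp hcirc).enorm
  have : ∫⁻ p in Ioo (0:ℝ) 1 ×ˢ Ioo (-π) π, ENNReal.ofReal p.1 *
      ‖h (circleMap 0 p.1 p.2)‖ₑ = ∫⁻ r in Ioo (0:ℝ) 1, ENNReal.ofReal r *
        ∫⁻ θ in Ioo (-π) π, ‖h (circleMap 0 r θ)‖ₑ := by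
    rw [Measure.volume_eq_prod, ← Measure.prod_restrict, lintegral_prod _ hmeas.aemeasurable]
    simp only
    congr 1; ext r
    rw [lintegral_const_mul' _ _ ENNReal.ofReal_ne_top]
  rw [← this]
  apply le_of_eq
  apply setLIntegral_congr_fun (measurableSet_Ioo.prod measurableSet_Ioo)
  intro p hp
  have hpb : circleMap 0 p.1 p.2 ∈ ball (0:ℂ) 1 := by
    simp [abs_of_pos hp.1.1, hp.1.2]
  simp only [hcm, smul_eq_mul, indicator_of_mem hpb]

lemma besov_bdd {f : ℂ → ℂ} (hf : f ∈ Besov1) :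
    ∃ C : ℝ, ∀ z ∈ ball (0:ℂ) 1, ‖f z‖ ≤ C := by
  obtain ⟨hol, hfin⟩ := hf
  set h := deriv (deriv f) with hh
  have hfin' : ∫⁻ z in ball (0:ℂ) 1, ‖h z‖ₑ < ⊤ := by
    simp only [dA, Measure.restrict_smul, lintegral_smul_measure, smul_eq_mul, ofReal_norm] at hfin
    by_contra hcon
    rw [not_lt_top_iff.mp hcon, ENNReal.mul_top (by simp)] at hfin
    exact lt_irrefl _ hfin
  set N := ENNReal.ofReal (2 / π) * ∫⁻ z in ball (0:ℂ) 1, ‖h z‖ₑ with hN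
  have hNt : N ≠ ⊤ := ENNReal.mul_ne_top ENNReal.ofReal_ne_top hfin'.ne
  refine ⟨N.toReal + (‖f 0‖ + ‖deriv f 0‖), fun z hz => ?_⟩
  have hz' : ‖z‖ < 1 := by simpa using hz
  have hb : ‖f z - (f 0 + z * deriv f 0)‖ₑ ≤ N := by
    rw [← taylor hol hz', intervalIntegral.integral_of_le zero_le_one, integral_Ioc_eq_integral_Ioo]
    refine (enorm_integral_le_lintegral_enorm _).trans ?_
    calc _ ≤ ∫⁻ r in Ioo (0:ℝ) 1, ENNReal.ofReal (2 / π) *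
          (ENNReal.ofReal r * ∫⁻ θ in Ioo (-π) π, ‖h (circleMap 0 r θ)‖ₑ) := by
          apply setLIntegral_mono' measurableSet_Ioo
          intro r hr
          have hcb := cauchy_bound (hol_deriv (hol_deriv hol)) hr.1 hr.2 hz'
          have hr1 : 0 < 1 - r := by linarith [hr.2]
          have hr0 := hr.1
          refine le_trans ?_ (mul_le_mul_right (mul_le_mul_right hcb _) _)
          rw [enorm_mul, ← mul_assoc, ← mul_assoc, ← ENNReal.ofReal_mul (by positivity),
            ← ENNReal.ofReal_mul (by positivity)]
          refine mul_le_mul_left ?_ _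
          rw [← ofReal_norm]
          apply ENNReal.ofReal_le_ofReal
          have e : (2 * r * (1 - r^2) : ℂ) = ((2 * r * (1 - r^2) : ℝ) : ℂ) := by push_cast; rfl
          rw [e, norm_mul, norm_real, norm_pow, Real.norm_eq_abs,
            abs_of_nonneg (mul_nonneg (by positivity) (by nlinarith [hr.2]))]
          have e2 : 2 / π * r * (2 * π * (1 - r)) = 4 * r * (1 - r) := by
            field_simp; ring
          rw [e2]
          have h1 : ‖z‖^2 ≤ 1 := by nlinarith [norm_nonneg z]
          have h2 : 0 ≤ 2 * r * (1 - r^2) := mul_nonneg (by positivity) (by nlinarith [hr.2])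
          have h3 : 2 * r * (1 - r^2) ≤ 4 * r * (1 - r) := by nlinarith [mul_pos hr0 hr1, mul_pos (mul_pos hr0 hr1) hr1]
          nlinarith
      _ = ENNReal.ofReal (2 / π) * ∫⁻ r in Ioo (0:ℝ) 1, 
          (ENNReal.ofReal r * ∫⁻ θ in Ioo (-π) π, ‖h (circleMap 0 r θ)‖ₑ) :=
          lintegral_const_mul' _ _ ENNReal.ofReal_ne_top
      _ ≤ N := by
          rw [hN]
          gcongr
          exact polar_ball h (measurable_deriv _)
  have hb' : ‖f z - (f 0 + z * deriv f 0)‖ ≤ N.toReal := by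
    have := ENNReal.toReal_mono hNt hb
    simpa using this
  have h5 : ‖f 0 + z * deriv f 0‖ ≤ ‖f 0‖ + ‖deriv f 0‖ := by
    refine (norm_add_le _ _).trans ?_
    rw [norm_mul]
    nlinarith [norm_nonneg (deriv f 0)]
  calc ‖f z‖ = ‖(f z - (f 0 + z * deriv f 0)) + (f 0 + z * deriv f 0)‖ := by congr 1; ring
    _ ≤ _ := (norm_add_le _ _).trans (add_le_add hb' h5)

/-- For `g` holomorphic on the unit disc, `T_g` maps `B¹` into the Bloch
space iff `g` is a Bloch function. -/
theorem stmt1 (g : ℂ → ℂ) (hg : HolOn g) :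
    MapsInto (Tg g) Besov1 Bloch ↔ g ∈ Bloch := by
  constructor
  · intro H
    have h1 : HolOn (fun _ => 1) := differentiableOn_const _
    obtain ⟨-, C, hC⟩ := H (fun _ => 1) ⟨h1, by simp⟩
    refine ⟨hg, C, fun z hz => ?_⟩
    have := hC z hz
    rwa [(Tg_hasDerivAt hg h1 (by simpa using hz)).deriv, mul_one] at this
  · rintro ⟨-, C, hC⟩ f hf
    obtain ⟨M, hM⟩ := besov_bdd hf
    refine ⟨fun z hz => (Tg_hasDerivAt hg hf.1
      (by simpa using hz)).differentiableAt.differentiableWithinAt, C * M, fun z hz => ?_⟩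
    have hz' : ‖z‖ < 1 := by simpa using hz
    rw [(Tg_hasDerivAt hg hf.1 hz').deriv, norm_mul, ← mul_assoc]
    have h0 : 0 ≤ (1 - ‖z‖ ^ 2) * ‖deriv g z‖ :=
      mul_nonneg (by nlinarith [norm_nonneg z]) (norm_nonneg _)
    exact mul_le_mul (hC z hz) (hM z hz) (norm_nonneg _) (h0.trans (hC z hz))
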